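/- Let R be a commutative Noetherian ring, M a finitely generated R-module, and n ≥ 1. Then a prime ideal p of R contains ca_R^n(M) if and only if the projective dimension of M_p over R_p is at least n. Equivalently, {p ∈ Spec(R) : pd_{R_p}(M_p) ≥ n} = V(ca_R^n(M)). -/

import Mathlib

open CategoryTheory

noncomputable section

universe u

variable (R : Type u) [CommRing R]

/-- The `n`-th Ext group of two `R`-modules, as an `R`-module. -/
abbrev ExtM (n : ℕ) (M N : ModuleCat.{u} R) : ModuleCat.{u} R :=
  ((Ext R (ModuleCat.{u} R) n).obj (Opposite.op M)).obj N

/-- The `n`-th cohomological annihilator of a module `M`: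
elements `r` with `r • Ext^i(M, N) = 0` for all `i ≥ n` and all finitely generated `N`. -/
def caN (n : ℕ) (M : ModuleCat.{u} R) : Ideal R where
  carrier := {r | ∀ i, n ≤ i → ∀ N : ModuleCat.{u} R, Module.Finite R N →
    ∀ x : ExtM R i M N, r • x = 0}
  zero_mem' := by intro i _ N _ x; simp
  add_mem' := by
    intro a b ha hb i hi N hN x
    rw [add_smul, ha i hi N hN x, hb i hi N hN x, add_zero]
  smul_mem' := by
    intro c r hr i hi N hN x
    simp only [smul_eq_mul, mul_smul, hr i hi N hN x, smul_zero]

/-- The cohomological annihilator `ca_R(M) = ⋃ₙ ca_R^n(M)`. -/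
def ca (M : ModuleCat.{u} R) : Set R := ⋃ n : ℕ, (caN R n M : Set R)

/-- The `n`-th co-cohomological annihilator of a module `M`. -/
def cocaN (n : ℕ) (M : ModuleCat.{u} R) : Ideal R where
  carrier := {r | ∀ i, n ≤ i → ∀ N : ModuleCat.{u} R, Module.Finite R N →
    ∀ x : ExtM R i N M, r • x = 0}
  zero_mem' := by intro i _ N _ x; simp
  add_mem' := by
    intro a b ha hb i hi N hN x
    rw [add_smul, ha i hi N hN x, hb i hi N hN x, add_zero]
  smul_mem' := by
    intro c r hr i hi N hN x
    simp only [smul_eq_mul, mul_smul, hr i hi N hN x, smul_zero]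

/-- The co-cohomological annihilator `coca_R(M) = ⋃ₙ coca_R^n(M)`. -/
def coca (M : ModuleCat.{u} R) : Set R := ⋃ n : ℕ, (cocaN R n M : Set R)

/-- `M` has projective dimension at most `n`: `Ext^i(M, -) = 0` for all `i > n`. -/
def projDimLE (n : ℕ) (M : ModuleCat.{u} R) : Prop :=
  ∀ i : ℕ, n < i → ∀ N : ModuleCat.{u} R, Subsingleton (ExtM R i M N)

/-- `M` has injective dimension at most `n`: `Ext^i(-, M) = 0` for all `i > n`. -/
def injDimLE (n : ℕ) (M : ModuleCat.{u} R) : Prop :=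
  ∀ i : ℕ, n < i → ∀ N : ModuleCat.{u} R, Subsingleton (ExtM R i N M)

/-- `K` is an `n`-th syzygy of `M` with respect to resolutions by
finitely generated projective modules. -/
def IsSyz : ℕ → ModuleCat.{u} R → ModuleCat.{u} R → Prop
  | 0, M, K => Nonempty (K ≃ₗ[R] M)
  | n + 1, M, K => ∃ (L P : ModuleCat.{u} R), IsSyz n M L ∧
      Module.Finite R P ∧ Module.Projective R P ∧
      ∃ f : P →ₗ[R] L, Function.Surjective f ∧ Nonempty (K ≃ₗ[R] LinearMap.ker f)

/-- `X` is a direct summand of `Y`. -/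
def IsSummand (X Y : ModuleCat.{u} R) : Prop :=
  ∃ (i : X →ₗ[R] Y) (p : Y →ₗ[R] X), p.comp i = LinearMap.id

/-- `X` is a direct summand of a finite direct sum of copies of `G`. -/
def IsSummandOfCopies (G X : ModuleCat.{u} R) : Prop :=
  ∃ k : ℕ, IsSummand R X (ModuleCat.of R (Fin k → G))

/-- The subcategories `thickⁿ(G)` of `mod R`. -/
def thickN (G : ModuleCat.{u} R) : ℕ → Set (ModuleCat.{u} R)
  | 0 => {X | Subsingleton X}
  | n + 1 => {X | ∃ (Y Y₁ Y₂ : ModuleCat.{u} R) (f : Y₁ →ₗ[R] Y) (g : Y →ₗ[R] Y₂),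
      Function.Injective f ∧ Function.Surjective g ∧ LinearMap.ker g = LinearMap.range f ∧
      ((Y₁ ∈ thickN G n ∧ IsSummandOfCopies R G Y₂) ∨
        (IsSummandOfCopies R G Y₁ ∧ Y₂ ∈ thickN G n)) ∧
      IsSummand R X Y}

/-- The balls `|G|ₙ` of Dao–Takahashi. -/
def ballN (G : ModuleCat.{u} R) : ℕ → Set (ModuleCat.{u} R)
  | 0 => {X | Subsingleton X}
  | n + 1 => {Y | ∃ (Y' Y₁ Y₂ : ModuleCat.{u} R)
      (f : Y₁ →ₗ[R] (ModuleCat.of R (Y × Y'))) (g : (ModuleCat.of R (Y × Y')) →ₗ[R] Y₂),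
      Function.Injective f ∧ Function.Surjective g ∧ LinearMap.ker g = LinearMap.range f ∧
      Y₁ ∈ ballN G n ∧ IsSummandOfCopies R G Y₂}

/-- A regular local ring: a Noetherian local ring whose maximal ideal can be
generated by `dim R` elements. -/
def IsRegularLocal (A : Type u) [CommRing A] [IsLocalRing A] : Prop :=
  IsNoetherianRing A ∧ ∃ s : Finset A, Ideal.span (↑s : Set A) = IsLocalRing.maximalIdeal A ∧
    (s.card : WithBot ℕ∞) = ringKrullDim A

/-- The localization of a module at a prime, as a module category object over the local ring. -/
abbrev locMod (p : PrimeSpectrum R) (M : ModuleCat.{u} R) :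
    ModuleCat.{u} (Localization.AtPrime p.asIdeal) :=
  ModuleCat.of (Localization.AtPrime p.asIdeal) (LocalizedModule p.asIdeal.primeCompl M)

/-- Depth of a module over a local ring, via vanishing of `Ext` from the residue field. -/
def depthE (A : Type u) [CommRing A] [IsLocalRing A] (N : ModuleCat.{u} A) : ℕ∞ :=
  sInf ((fun n : ℕ => (n : ℕ∞)) ''
    {n : ℕ | ¬ Subsingleton (ExtM A n (ModuleCat.of A (IsLocalRing.ResidueField A)) N)})

/-- The large restricted flat dimension of `M`. -/
def rfdE (M : ModuleCat.{u} R) : ℕ∞ :=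
  ⨆ p : PrimeSpectrum R,
    (depthE (Localization.AtPrime p.asIdeal)
        (ModuleCat.of (Localization.AtPrime p.asIdeal) (Localization.AtPrime p.asIdeal)) -
      depthE (Localization.AtPrime p.asIdeal) (locMod R p M))

/-- `r • f` factors through a finitely generated projective module. -/
def FactorsThroughProj (M : ModuleCat.{u} R) (f : M →ₗ[R] M) : Prop :=
  ∃ P : ModuleCat.{u} R, Module.Projective R P ∧ Module.Finite R P ∧
    ∃ (g : M →ₗ[R] P) (h : P →ₗ[R] M), h.comp g = f

/-- The annihilator of the stable endomorphism ring of `M`. -/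
def annStableEnd (M : ModuleCat.{u} R) : Set R :=
  {r | ∀ f : M →ₗ[R] M, FactorsThroughProj R M (r • f)}

/-- A resolving subcategory of `mod R`. -/
def IsResolving (C : Set (ModuleCat.{u} R)) : Prop :=
  (∀ P : ModuleCat.{u} R, Module.Finite R P → Module.Projective R P → P ∈ C) ∧
  (∀ X Y : ModuleCat.{u} R, Y ∈ C → IsSummand R X Y → X ∈ C) ∧
  (∀ (Y Y₁ Y₂ : ModuleCat.{u} R) (f : Y₁ →ₗ[R] Y) (g : Y →ₗ[R] Y₂),
    Function.Injective f → Function.Surjective g → LinearMap.ker g = LinearMap.range f →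
    Y₁ ∈ C → Y₂ ∈ C → Y ∈ C) ∧
  (∀ X ∈ C, ∀ K : ModuleCat.{u} R, IsSyz R 1 X K → K ∈ C)

/-- The smallest resolving subcategory containing `G`. -/
def resCl (G : ModuleCat.{u} R) : Set (ModuleCat.{u} R) :=
  ⋂₀ {C | IsResolving R C ∧ G ∈ C}

end

/-!
Let `P` be a projective resolution of `M` and `d : P_{i+1} ⟶ P_i` its differential. A scalar `r`
kills `Ext^j(M, -)` for all `j > i` if and only if `r • d = d ≫ h ≫ d` for some `h : P_i ⟶ P_{i+1}`:
such an `h` extends to a null-homotopy of `r` on `P` in degrees above `i`, and conversely `h` comes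
from `r` killing the class of `P_{i+1} ↠ im d` in `Ext^{i+1}(M, im d)`. Since `im d` is finitely
generated as soon as `P_{i+1}` is, testing on finitely generated modules loses nothing, so the
condition describes `ca^{i+1}(M)`, and for `r = 1` it says `pd M ≤ i`. As `Hom` out of a finitely
presented module commutes with localization, the condition with `r = 1` holds after localizing at
`p` if and only if it holds over `R` for some `r ∉ p`.
-/

section FiniteResolution

universe u

variable {R : Type u} [CommRing R]

theorem projective_forget₂_finite_free (n : ℕ) :
    Projective ((forget₂ (FGModuleCat.{u} R) (ModuleCat.{u} R)).obj
      (FGModuleCat.of R (Fin n → R))) :=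
  (IsProjective.iff_projective (R := R) (P := Fin n → R)).1 inferInstance

theorem exists_epi_of_finite_free (X : FGModuleCat.{u} R) :
    ∃ (n : ℕ) (f : FGModuleCat.of R (Fin n → R) ⟶ X), Epi f := by
  obtain ⟨n, f, hf⟩ := Module.Finite.exists_fin' R X
  refine ⟨n, FGModuleCat.ofHom f, (forget₂ _ (ModuleCat.{u} R)).epi_of_epi_map ?_⟩
  exact (ModuleCat.epi_iff_surjective _).2 hf

variable [IsNoetherianRing R]

instance : EnoughProjectives (FGModuleCat.{u} R) where
  presentation X := by
    obtain ⟨n, f, _⟩ := exists_epi_of_finite_free X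
    have := projective_forget₂_finite_free (R := R) n
    exact ⟨{ p := _, projective := Functor.projective_of_map_projective _ this, f := f }⟩

instance : (forget₂ (FGModuleCat.{u} R) (ModuleCat.{u} R)).PreservesProjectiveObjects where
  projective_obj {X} _ := by
    obtain ⟨n, f, _⟩ := exists_epi_of_finite_free X
    let retract : Retract X (FGModuleCat.of R (Fin n → R)) :=
      ⟨Projective.factorThru (𝟙 X) f, f, Projective.factorThru_comp _ _⟩
    have := projective_forget₂_finite_free (R := R) n
    exact (retract.map (forget₂ _ (ModuleCat.{u} R))).projective

theorem exists_projectiveResolution_finite (M : ModuleCat.{u} R) [Module.Finite R M] :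
    ∃ P : ProjectiveResolution M, ∀ i, Module.Finite R (P.complex.X i) :=
  ⟨(forget₂ (FGModuleCat.{u} R) (ModuleCat.{u} R)).mapProjectiveResolution
      (ProjectiveResolution.of (FGModuleCat.of R M)),
    fun i ↦ ((ProjectiveResolution.of (FGModuleCat.of R M)).complex.X i).property⟩

end FiniteResolution

section Pseudoinverse

open Limits

variable {R : Type*} [CommRing R] {C : Type*} [Category* C]

/-- A morphism `f` has a pseudoinverse up to the scalar `r` if `f ≫ g ≫ f = r • f` for some `g`.
For a differential `d : P_{i+1} ⟶ P_i` of a projective resolution of `X`, it expresses that `r`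
annihilates `Ext^j(X, -)` for all `j > i`, as a condition on a single map that is easy to
localize. -/
def HasPseudoinverseUpTo [Preadditive C] [Linear R C] (r : R) {X Y : C} (f : X ⟶ Y) : Prop :=
  ∃ g : Y ⟶ X, f ≫ g ≫ f = r • f

variable [Abelian C] [Linear R C]

theorem HasPseudoinverseUpTo.exists_homotopy {r : R} {S : ShortComplex C} (hS : S.Exact)
    [Projective S.X₂] (h : HasPseudoinverseUpTo r S.g) :
    ∃ (k : S.X₂ ⟶ S.X₁) (h : S.X₃ ⟶ S.X₂), k ≫ S.f + S.g ≫ h = r • 𝟙 S.X₂ := by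
  obtain ⟨h, hh⟩ := h
  have hg : (r • 𝟙 S.X₂ - S.g ≫ h) ≫ S.g = 0 := by
    simp [Preadditive.sub_comp, hh]
  exact ⟨hS.liftFromProjective _ hg, h, by simp⟩

theorem HasPseudoinverseUpTo.of_exact {r : R} {S : ShortComplex C} (hS : S.Exact)
    [Projective S.X₂] (h : HasPseudoinverseUpTo r S.g) : HasPseudoinverseUpTo r S.f := by
  obtain ⟨k, h, hkh⟩ := h.exists_homotopy hS
  refine ⟨k, ?_⟩
  simpa using congr(S.f ≫ $hkh)

theorem HasPseudoinverseUpTo.of_factorThruImage {r : R} {X Y : C} [Projective Y] {f : X ⟶ Y}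
    (g : Y ⟶ image f) (hg : f ≫ g = r • factorThruImage f) : HasPseudoinverseUpTo r f := by
  refine ⟨Projective.factorThru g (factorThruImage f), ?_⟩
  calc f ≫ Projective.factorThru g (factorThruImage f) ≫ f
      = f ≫ (Projective.factorThru g (factorThruImage f) ≫ factorThruImage f) ≫ image.ι f := by
        rw [Category.assoc, image.fac]
    _ = r • f := by
        rw [Projective.factorThru_comp, ← Category.assoc, hg, Linear.smul_comp, image.fac]

theorem HasPseudoinverseUpTo.of_le {X : C} (P : ProjectiveResolution X) {r : R} {i j : ℕ}
    (hij : i ≤ j) (h : HasPseudoinverseUpTo r (P.complex.d (i + 1) i)) :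
    HasPseudoinverseUpTo r (P.complex.d (j + 1) j) := by
  induction j, hij using Nat.le_induction with
  | base => exact h
  | succ j _ hj => exact hj.of_exact (P.exact_succ j)

end Pseudoinverse

section Ext

open Limits Opposite

theorem mem_annihilator_homology_iff {R : Type*} [CommRing R] (S : ShortComplex (ModuleCat R))
    (r : R) :
    r ∈ Module.annihilator R S.homology ↔ ∀ y, S.g y = 0 → ∃ x, S.f x = r • y := by
  let e : S.homology ≃ₗ[R] LinearMap.ker S.g.hom ⧸ LinearMap.range S.moduleCatToCycles :=
    S.moduleCatHomologyIso.toLinearEquiv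
  rw [e.annihilator_eq]
  simp only [Module.mem_annihilator]
  refine ⟨fun h y hy ↦ ?_, fun h z ↦ ?_⟩
  · have hz := h (Submodule.Quotient.mk ⟨y, hy⟩)
    rw [← Submodule.Quotient.mk_smul, Submodule.Quotient.mk_eq_zero] at hz
    obtain ⟨x, hx⟩ := hz
    exact ⟨x, congrArg Subtype.val hx⟩
  · obtain ⟨⟨y, hy⟩, rfl⟩ := Submodule.Quotient.mk_surjective _ z
    obtain ⟨x, hx⟩ := h y hy
    rw [← Submodule.Quotient.mk_smul, Submodule.Quotient.mk_eq_zero]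
    exact ⟨x, Subtype.ext hx⟩

variable {R : Type*} [CommRing R] {C : Type*} [Category* C] [Abelian C] [Linear R C]
  [EnoughProjectives C] {X : C} (P : ProjectiveResolution X)

theorem mem_annihilator_ext_succ_iff (i : ℕ) (Y : C) (r : R) :
    r ∈ Module.annihilator R (((Ext R C (i + 1)).obj (op X)).obj Y) ↔
      ∀ f : P.complex.X (i + 1) ⟶ Y, P.complex.d (i + 2) (i + 1) ≫ f = 0 →
        ∃ g : P.complex.X i ⟶ Y, P.complex.d (i + 1) i ≫ g = r • f := by
  let K := P.complex.linearYonedaObj R Y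
  let e : ((Ext R C (i + 1)).obj (op X)).obj Y ≅ (K.sc' i (i + 1) (i + 2)).homology :=
    P.isoExt (i + 1) Y ≪≫
      ShortComplex.homologyMapIso (K.isoSc' i (i + 1) (i + 2) (by simp) (by simp))
  rw [e.toLinearEquiv.annihilator_eq]
  exact mem_annihilator_homology_iff _ _

theorem HasPseudoinverseUpTo.mem_annihilator_ext_succ {r : R} {i : ℕ}
    (h : HasPseudoinverseUpTo r (P.complex.d (i + 1) i)) (Y : C) :
    r ∈ Module.annihilator R (((Ext R C (i + 1)).obj (op X)).obj Y) := by
  refine (mem_annihilator_ext_succ_iff P i Y r).2 fun f hf ↦ ?_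
  obtain ⟨k, h, hkh⟩ := h.exists_homotopy (P.exact_succ i)
  refine ⟨h ≫ f, ?_⟩
  simpa [hf, Preadditive.add_comp] using congr($hkh ≫ f)

theorem HasPseudoinverseUpTo.mem_annihilator_ext_of_lt {r : R} {i j : ℕ}
    (h : HasPseudoinverseUpTo r (P.complex.d (i + 1) i)) (hij : i < j) (Y : C) :
    r ∈ Module.annihilator R (((Ext R C j).obj (op X)).obj Y) := by
  obtain ⟨k, rfl⟩ := Nat.exists_eq_add_one_of_ne_zero (Nat.ne_zero_of_lt hij)
  exact (h.of_le P (Nat.le_of_lt_succ hij)).mem_annihilator_ext_succ P Y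

theorem hasPseudoinverseUpTo_of_mem_annihilator_ext_image {r : R} {i : ℕ}
    (h : r ∈ Module.annihilator R
      (((Ext R C (i + 1)).obj (op X)).obj (image (P.complex.d (i + 1) i)))) :
    HasPseudoinverseUpTo r (P.complex.d (i + 1) i) := by
  have hcocycle : P.complex.d (i + 2) (i + 1) ≫ factorThruImage (P.complex.d (i + 1) i) = 0 := by
    simp [← cancel_mono (image.ι (P.complex.d (i + 1) i))]
  obtain ⟨g, hg⟩ := (mem_annihilator_ext_succ_iff P i _ r).1 h _ hcocycle
  exact .of_factorThruImage g hg

end Ext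

section CohomologicalAnnihilator

open Limits

universe u

variable {R : Type u} [CommRing R] {M : ModuleCat.{u} R} (P : ProjectiveResolution M) (i : ℕ)

theorem mem_caN_succ_iff_hasPseudoinverseUpTo [Module.Finite R (P.complex.X (i + 1))] {r : R} :
    r ∈ caN R (i + 1) M ↔ HasPseudoinverseUpTo r (P.complex.d (i + 1) i) := by
  have : Module.Finite R (image (P.complex.d (i + 1) i) : ModuleCat R) :=
    .of_surjective (factorThruImage (P.complex.d (i + 1) i)).hom
      ((ModuleCat.epi_iff_surjective _).1 inferInstance)
  refine ⟨fun hr ↦ ?_, fun h j hij N _ ↦ ?_⟩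
  · exact hasPseudoinverseUpTo_of_mem_annihilator_ext_image P
      (Module.mem_annihilator.2 (hr (i + 1) le_rfl _ this))
  · exact Module.mem_annihilator.1 (h.mem_annihilator_ext_of_lt P hij N)

theorem projDimLE_iff_hasPseudoinverseUpTo_one :
    projDimLE R i M ↔ HasPseudoinverseUpTo (1 : R) (P.complex.d (i + 1) i) := by
  refine ⟨fun h ↦ hasPseudoinverseUpTo_of_mem_annihilator_ext_image P ?_, fun h j hij N ↦ ?_⟩
  · have := h (i + 1) i.lt_succ_self (image (P.complex.d (i + 1) i))
    exact Module.mem_annihilator.2 fun x ↦ Subsingleton.elim _ _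
  · rw [← Module.annihilator_eq_top_iff (R := R), Ideal.eq_top_iff_one]
    exact h.mem_annihilator_ext_of_lt P hij N

theorem projDimLE_congr {M N : ModuleCat.{u} R} (e : M ≅ N) :
    projDimLE R i M ↔ projDimLE R i N :=
  forall₃_congr fun j _ L ↦
    (((Ext R (ModuleCat.{u} R) j).mapIso e.op).app L).toLinearEquiv.toEquiv.subsingleton_congr.symm

end CohomologicalAnnihilator

section Localization

universe u

variable {R : Type u} [CommRing R] (S : Submonoid R)

theorem localizedModuleFunctor_map_smul {X Y : ModuleCat.{u} R} (r : R) (f : X ⟶ Y) :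
    (ModuleCat.localizedModuleFunctor S).map (r • f) =
      algebraMap R (Localization S) r • (ModuleCat.localizedModuleFunctor S).map f := by
  let L := IsLocalizedModule.mapExtendScalars S (X.localizedModuleMkLinearMap S)
    (Y.localizedModuleMkLinearMap S) (Localization S)
  have hL : L (r • f.hom) = algebraMap R (Localization S) r • L f.hom := by
    rw [map_smul, algebraMap_smul]
  exact ModuleCat.hom_ext hL

theorem exists_localizedModuleFunctor_map_eq_smul {X Y : ModuleCat.{u} R}
    [Module.FinitePresentation R X]
    (g : (ModuleCat.localizedModuleFunctor S).obj X ⟶ (ModuleCat.localizedModuleFunctor S).obj Y) :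
    ∃ s ∈ S, ∃ f : X ⟶ Y,
      (ModuleCat.localizedModuleFunctor S).map f = algebraMap R (Localization S) s • g := by
  let gₗ : X.localizedModule S →ₗ[Localization S] Y.localizedModule S := g.hom
  obtain ⟨⟨f, s⟩, hf⟩ := IsLocalizedModule.surj S
    (IsLocalizedModule.mapExtendScalars S (X.localizedModuleMkLinearMap S)
      (Y.localizedModuleMkLinearMap S) (Localization S)) gₗ
  refine ⟨s, s.2, ModuleCat.ofHom f, ModuleCat.hom_ext ?_⟩
  exact hf.symm.trans (algebraMap_smul (Localization S) (s : R) gₗ).symm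

theorem exists_smul_eq_of_localizedModuleFunctor_map_eq {X Y : ModuleCat.{u} R}
    [Module.Finite R X] {f g : X ⟶ Y}
    (h : (ModuleCat.localizedModuleFunctor S).map f = (ModuleCat.localizedModuleFunctor S).map g) :
    ∃ s ∈ S, s • f = s • g := by
  have map_mk (f : X ⟶ Y) (x : X) :
      (ModuleCat.localizedModuleFunctor S).map f (X.localizedModuleMkLinearMap S x) =
        Y.localizedModuleMkLinearMap S (f x) :=
    IsLocalizedModule.map_apply S (X.localizedModuleMkLinearMap S)
      (Y.localizedModuleMkLinearMap S) f.hom x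
  have hcomp : Y.localizedModuleMkLinearMap S ∘ₗ f.hom =
      Y.localizedModuleMkLinearMap S ∘ₗ g.hom :=
    LinearMap.ext fun x ↦ (map_mk f x).symm.trans (h ▸ map_mk g x)
  obtain ⟨s, hs⟩ := Module.Finite.exists_smul_of_comp_eq_of_isLocalizedModule S
    (Y.localizedModuleMkLinearMap S) f.hom g.hom hcomp
  exact ⟨s, s.2, ModuleCat.hom_ext hs⟩

theorem hasPseudoinverseUpTo_one_localizedModuleFunctor_map_iff {X Y : ModuleCat.{u} R}
    [Module.Finite R X] [Module.FinitePresentation R Y] (f : X ⟶ Y) :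
    HasPseudoinverseUpTo (1 : Localization S) ((ModuleCat.localizedModuleFunctor S).map f) ↔
      ∃ r ∈ S, HasPseudoinverseUpTo r f := by
  constructor
  · rintro ⟨g, hg⟩
    obtain ⟨s, hs, g', hg'⟩ := exists_localizedModuleFunctor_map_eq_smul S g
    have hmap : (ModuleCat.localizedModuleFunctor S).map (f ≫ g' ≫ f) =
        (ModuleCat.localizedModuleFunctor S).map (s • f) := by
      rw [localizedModuleFunctor_map_smul, Functor.map_comp, Functor.map_comp, hg',
        Linear.smul_comp, Linear.comp_smul, hg, one_smul]
    obtain ⟨t, ht, hts⟩ := exists_smul_eq_of_localizedModuleFunctor_map_eq S hmap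
    exact ⟨t * s, S.mul_mem ht hs, t • g', by
      rw [Linear.smul_comp, Linear.comp_smul, hts, mul_smul]⟩
  · rintro ⟨r, hr, g, hg⟩
    obtain ⟨u, hu⟩ := (IsLocalization.map_units (Localization S) ⟨r, hr⟩).exists_left_inv
    refine ⟨u • (ModuleCat.localizedModuleFunctor S).map g, ?_⟩
    rw [Linear.smul_comp, Linear.comp_smul, ← Functor.map_comp, ← Functor.map_comp, hg,
      localizedModuleFunctor_map_smul, smul_smul, hu]

theorem projDimLE_localizedModule_iff {M : ModuleCat.{u} R} (P : ProjectiveResolution M) (i : ℕ)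
    [Module.Finite R (P.complex.X i)] [Module.Finite R (P.complex.X (i + 1))] :
    projDimLE (Localization S) i (.of _ (LocalizedModule S M)) ↔ ∃ r ∈ S, r ∈ caN R (i + 1) M := by
  have : Module.Projective R (P.complex.X i) := (IsProjective.iff_projective _).2 (P.projective i)
  have : Module.FinitePresentation R (P.complex.X i) := Module.finitePresentation_of_projective _ _
  let e : (ModuleCat.localizedModuleFunctor S).obj M ≅ .of _ (LocalizedModule S M) :=
    (Shrink.linearEquiv (Localization S) (LocalizedModule S M)).toModuleIso
  rw [← projDimLE_congr i e, projDimLE_iff_hasPseudoinverseUpTo_one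
    ((ModuleCat.localizedModuleFunctor S).mapProjectiveResolution P)]
  simp only [mem_caN_succ_iff_hasPseudoinverseUpTo P]
  exact hasPseudoinverseUpTo_one_localizedModuleFunctor_map_iff S _

end Localization

theorem stmt2_general {R : Type u} [CommRing R] {M : ModuleCat.{u} R} (P : ProjectiveResolution M)
    (i : ℕ) [Module.Finite R (P.complex.X i)] [Module.Finite R (P.complex.X (i + 1))] :
    {p : PrimeSpectrum R | ¬ projDimLE (Localization.AtPrime p.asIdeal) i (locMod R p M)} =
      {p : PrimeSpectrum R | (caN R (i + 1) M : Set R) ⊆ p.asIdeal} := by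
  ext p
  have hp : projDimLE (Localization.AtPrime p.asIdeal) i (locMod R p M) ↔
      ∃ r ∉ p.asIdeal, r ∈ caN R (i + 1) M :=
    projDimLE_localizedModule_iff p.asIdeal.primeCompl P i
  rw [Set.mem_ofPred_eq, Set.mem_ofPred_eq, hp, not_iff_comm, Set.not_subset]
  exact exists_congr fun r ↦ and_comm

/-- `{p | pd_{R_p} M_p ≥ n} = V(ca_R^n(M))` for `n ≥ 1`. -/
theorem stmt2 (R : Type u) [CommRing R] [IsNoetherianRing R]
    (M : ModuleCat.{u} R) [Module.Finite R M] (n : ℕ) (hn : 1 ≤ n) :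
    {p : PrimeSpectrum R |
        ¬ projDimLE (Localization.AtPrime p.asIdeal) (n - 1) (locMod R p M)} =
      {p : PrimeSpectrum R | (caN R n M : Set R) ⊆ p.asIdeal} := by
  obtain ⟨i, rfl⟩ := Nat.exists_eq_add_of_le' hn
  obtain ⟨P, _⟩ := exists_projectiveResolution_finite M
  exact stmt2_general P i
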